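/- arXiv:2106.15358 — 2 statements merged into one kernel-verified Lean document; each statement's English description precedes it below -/
import Mathlib

section
/- Let X₁, …, X_m be i.i.d. standard normal random variables and let |X|_{(1)} ≤ |X|_{(2)} ≤ … ≤ |X|_{(m)} denote the order statistics of |X₁|, …, |X_m|. There exists a constant μ ≥ (1/18)√(π/2) and a universal constant c > 0 such that for every ε with 0 ≤ ε ≤ μ, with probability at least 1 − e^{−c m ε²}: √m (μ − ε) < ( ∑_{i=1}^{⌈m/2⌉} |X|_{(i)}² )^{1/2} < √m (μ + ε). -/
open MeasureTheory ProbabilityTheory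

/-- `X : Ω → ℝ^m` has i.i.d. standard normal coordinates. -/
def IIDStdGaussianVec {Ω : Type} [MeasurableSpace Ω] (P : Measure Ω) (m : ℕ)
    (X : Ω → Fin m → ℝ) : Prop :=
  Measure.map X P = Measure.pi fun _ : Fin m => gaussianReal 0 1

noncomputable abbrev gam : Measure ℝ := gaussianReal 0 1
noncomputable abbrev Gam (m : ℕ) : Measure (Fin m → ℝ) := Measure.pi fun _ : Fin m => gaussianReal 0 1

lemma hoeff (f : ℝ → ℝ) (hf : Measurable f) (a b : ℝ) (hab : ∀ x, f x ∈ Set.Icc a b) (m : ℕ)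
    (s : ℝ) (hs : 0 ≤ s) :
    (Gam m).real {x | s ≤ ∑ i, (f (x i) - ∫ y, f y ∂gam)} ≤
      Real.exp (-(2 * s ^ 2 / (m * (b - a) ^ 2))) := by
  have h1 : HasSubgaussianMGF (fun y => f y - ∫ y, f y ∂gam) ((‖b - a‖₊ / 2) ^ 2) gam :=
    hasSubgaussianMGF_of_mem_Icc hf.aemeasurable (Filter.Eventually.of_forall hab)
  have h2 : iIndepFun (fun (i : Fin m) (x : Fin m → ℝ) => f (x i) - ∫ y, f y ∂gam) (Gam m) :=
    iIndepFun_pi (X := fun _ y => f y - ∫ y, f y ∂gam) (fun i => (hf.sub_const _).aemeasurable)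
  have h3 : ∀ i : Fin m, HasSubgaussianMGF (fun x : Fin m → ℝ => f (x i) - ∫ y, f y ∂gam)
      ((‖b - a‖₊ / 2) ^ 2) (Gam m) := by
    intro i
    have e := (measurePreserving_eval (fun _ : Fin m => gaussianReal 0 1) i)
    have h1' : HasSubgaussianMGF (fun y => f y - ∫ y, f y ∂gam) ((‖b - a‖₊ / 2) ^ 2)
        ((Gam m).map (Function.eval i)) := e.map_eq.symm ▸ h1
    exact HasSubgaussianMGF.of_map e.measurable.aemeasurable h1'
  have := HasSubgaussianMGF.measure_sum_ge_le_of_iIndepFun h2 (s := Finset.univ) (fun i _ => h3 i) hs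
  refine this.trans (le_of_eq ?_)
  congr 1
  simp only [Finset.sum_const, Finset.card_univ, Fintype.card_fin, nsmul_eq_mul]
  push_cast
  rw [Real.norm_eq_abs, div_pow, sq_abs]
  by_cases hz : (m : ℝ) * (b - a) ^ 2 = 0
  · rw [hz, show 2 * ((m : ℝ) * ((b - a) ^ 2 / 2 ^ 2)) = (m * (b - a) ^ 2) / 2 by ring, hz]; simp
  · have h1 : (m : ℝ) ≠ 0 := left_ne_zero_of_mul hz
    have h2 : (b - a) ^ 2 ≠ 0 := right_ne_zero_of_mul hz
    field_simp

lemma tight {Ω : Type*} [MeasurableSpace Ω] (P : Measure Ω) [IsProbabilityMeasure P] (h : Ω → ℝ)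
    (hh : Measurable h) : ∃ L : ℝ, 0 < L ∧ P {x | L < |h x|} ≤ ENNReal.ofReal (1/4) := by
  have h1 : Filter.Tendsto (fun n : ℕ => P {x | (n : ℝ) < |h x|}) Filter.atTop
      (nhds (P (⋂ n : ℕ, {x | (n : ℝ) < |h x|}))) := by
    apply tendsto_measure_iInter_atTop
    · intro n
      exact (measurableSet_lt measurable_const (hh.abs)).nullMeasurableSet
    · intro n k hnk x hx
      simp only [Set.mem_ofPred_eq] at *
      exact lt_of_le_of_lt (by exact_mod_cast hnk) hx
    · exact ⟨0, measure_ne_top _ _⟩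
  have h2 : (⋂ n : ℕ, {x | (n : ℝ) < |h x|}) = ∅ := by
    ext x
    simp only [Set.mem_iInter, Set.mem_ofPred_eq, Set.mem_empty_iff_false, iff_false, not_forall, not_lt]
    exact exists_nat_ge _
  rw [h2, measure_empty] at h1
  have h3 := h1.eventually (gt_mem_nhds (show (0:ENNReal) < ENNReal.ofReal (1/4) by simp))
  obtain ⟨n, hn, hn'⟩ := (h3.and (Filter.eventually_ge_atTop 1)).exists
  exact ⟨n, by exact_mod_cast hn', hn.le⟩

lemma dens1 (u : ℝ) : gaussianReal 0 (.mk ((Real.exp u) ^ 2) (sq_nonneg _)) =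
    gam.withDensity (fun x => ENNReal.ofReal (Real.exp (-u + x ^ 2 / 2 * (1 - Real.exp (-2 * u))))) := by
  have hv : (NNReal.mk ((Real.exp u) ^ 2) (sq_nonneg _)) ≠ 0 := by
    intro h
    have := congrArg NNReal.toReal h
    simp at this
  rw [gam, gaussianReal_of_var_ne_zero _ one_ne_zero, gaussianReal_of_var_ne_zero _ hv,
    ← withDensity_mul _ (measurable_gaussianPDF _ _) (by fun_prop)]
  congr 1
  ext x
  simp only [Pi.mul_apply, gaussianPDF]
  rw [← ENNReal.ofReal_mul (gaussianPDFReal_nonneg _ _ _)]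
  congr 1
  simp only [gaussianPDFReal, NNReal.coe_mk, NNReal.coe_one, mul_one, sub_zero]
  rw [Real.sqrt_mul (by positivity), Real.sqrt_sq (Real.exp_pos _).le, mul_inv, ← Real.exp_neg,
    mul_assoc, mul_assoc, ← Real.exp_add, ← Real.exp_add]
  congr 2
  have : Real.exp (-2 * u) = ((Real.exp u) ^ 2)⁻¹ := by
    rw [← Real.exp_nat_mul, ← Real.exp_neg]; congr 1; push_cast; ring
  rw [this]
  field_simp
  ring

lemma densm (m : ℕ) (r : ℝ → ENNReal) (hr : Measurable r) [IsProbabilityMeasure (gam.withDensity r)] :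
    Measure.pi (fun _ : Fin m => gam.withDensity r) = (Gam m).withDensity (fun x => ∏ i, r (x i)) := by
  refine (Measure.pi_eq fun s hs => ?_)
  rw [withDensity_apply _ (.univ_pi hs), ← lintegral_indicator (.univ_pi hs)]
  have : ∀ x : Fin m → ℝ, (Set.univ.pi s).indicator (fun x => ∏ i, r (x i)) x =
      ∏ i, (s i).indicator r (x i) := by
    intro x
    by_cases h : x ∈ Set.univ.pi s
    · rw [Set.indicator_of_mem h]
      refine Finset.prod_congr rfl fun i _ => ?_
      rw [Set.indicator_of_mem (h i trivial)]
    · rw [Set.indicator_of_notMem h]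
      simp only [Set.mem_pi, Set.mem_univ, true_imp_iff, not_forall] at h
      obtain ⟨i, hi⟩ := h
      exact (Finset.prod_eq_zero (Finset.mem_univ i) (Set.indicator_of_notMem hi _)).symm
  simp_rw [this]
  have h2 : iIndepFun (fun (i : Fin m) (x : Fin m → ℝ) => (s i).indicator r (x i)) (Gam m) :=
    iIndepFun_pi (X := fun i => (s i).indicator r) (fun i => (hr.indicator (hs i)).aemeasurable)
  have h3 := lintegral_prod_eq_prod_lintegral_of_indepFun Finset.univ _ h2
    (fun i => (hr.indicator (hs i)).comp (measurable_pi_apply i))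
  rw [h3]
  refine Finset.prod_congr rfl fun i _ => ?_
  rw [withDensity_apply _ (hs i), ← lintegral_indicator (hs i)]
  have e := (measurePreserving_eval (fun _ : Fin m => gaussianReal 0 1) i)
  exact e.lintegral_comp (hr.indicator (hs i))

lemma scale (m : ℕ) (hm : 1 ≤ m) (a L K : ℝ) (ha : |a| ≤ L)
    (E : Set (Fin m → ℝ)) (hE : MeasurableSet E)
    (hEK : ∀ y ∈ E, |∑ i, y i ^ 2 - m| ≤ K * √m) :
    Gam m {x | (fun i => Real.exp (a / √m) * x i) ∈ E} ≤ ENNReal.ofReal (Real.exp (L * K)) * Gam m E := by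
  set u := a / √m with hu
  have hm0 : 0 < √(m:ℝ) := Real.sqrt_pos.2 (by exact_mod_cast hm)
  have hmm : √(m:ℝ) * √m = m := Real.mul_self_sqrt (by positivity)
  have key : (Gam m).map (fun x i => Real.exp u * x i) = (Gam m).withDensity
      (fun x => ∏ i, ENNReal.ofReal (Real.exp (-u + x i ^ 2 / 2 * (1 - Real.exp (-2 * u))))) := by
    rw [Measure.pi_map_pi (f := fun _ y => Real.exp u * y) (fun i => by fun_prop)]
    simp only [gaussianReal_map_const_mul, mul_zero, mul_one, dens1]
    have : IsProbabilityMeasure (gam.withDensity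
        (fun x => ENNReal.ofReal (Real.exp (-u + x ^ 2 / 2 * (1 - Real.exp (-2 * u)))))) := by
      rw [← dens1 u]; infer_instance
    exact densm m _ (by fun_prop)
  have h1 : Gam m {x | (fun i => Real.exp u * x i) ∈ E} = (Gam m).map (fun x i => Real.exp u * x i) E := by
    rw [Measure.map_apply (by fun_prop) hE]; rfl
  rw [h1, key, withDensity_apply _ hE]
  calc _ ≤ ∫⁻ x in E, ENNReal.ofReal (Real.exp (L * K)) ∂(Gam m) := by
        apply setLIntegral_mono measurable_const
        intro y hy
        rw [← ENNReal.ofReal_prod_of_nonneg (fun i _ => (Real.exp_pos _).le), ← Real.exp_sum]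
        apply ENNReal.ofReal_le_ofReal
        apply Real.exp_le_exp.2
        rw [Finset.sum_add_distrib, ← Finset.sum_mul, ← Finset.sum_div]
        simp only [Finset.sum_const, Finset.card_univ, Fintype.card_fin, nsmul_eq_mul]
        have h2 : 1 - Real.exp (-2 * u) ≤ 2 * u := by
          have := Real.add_one_le_exp (-2 * u); linarith
        have h3 : 0 ≤ ∑ i, y i ^ 2 := Finset.sum_nonneg fun i _ => sq_nonneg _
        have h4 : u * (∑ i, y i ^ 2 - m) ≤ L * K := by
          refine (le_abs_self _).trans ?_
          rw [abs_mul]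
          calc |u| * _ ≤ (L / √m) * (K * √m) := by
                have : |u| ≤ L / √m := by
                  rw [hu, abs_div, abs_of_pos hm0]; gcongr
                have h5 := hEK y hy
                gcongr
                exact (abs_nonneg _).trans this
            _ = L * K := by field_simp
        nlinarith
    _ = _ := by simp

lemma cheb : ∃ K : ℝ, 0 < K ∧ ∀ m : ℕ, 1 ≤ m →
    Gam m {x | K * √m ≤ |∑ i, x i ^ 2 - m|} ≤ ENNReal.ofReal (1/4) := by
  have hL : MemLp (fun x : ℝ => x ^ 2) 2 gam := by
    have := (memLp_id_gaussianReal' (μ := 0) (v := 1) 4 (by simp))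
    have h4 := this.norm_rpow_div (q := 2) 
    have e : (4:ENNReal)/2 = 2 := by 
      rw [show (4:ENNReal) = 2 * 2 by norm_num, ENNReal.mul_div_cancel_right (by simp) (by simp)]
    rw [e] at h4
    refine h4.congr_norm (by fun_prop) ?_
    filter_upwards with x
    simp
  set V := Var[fun x : ℝ => x ^ 2; gam]
  have hV : 0 ≤ V := variance_nonneg _ _
  have hE : ∫ x, x ^ 2 ∂gam = 1 := by
    have h1 := variance_fun_id_gaussianReal (μ := 0) (v := 1)
    rw [variance_of_integral_eq_zero (by fun_prop) (by simp)] at h1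
    simpa using h1
  refine ⟨2 * (√V + 1), by positivity, fun m hm => ?_⟩
  have hm0 : (0:ℝ) < m := by exact_mod_cast hm
  have e := fun i : Fin m => (measurePreserving_eval (fun _ : Fin m => gaussianReal 0 1) i)
  have hS : MemLp (∑ i : Fin m, fun x : Fin m → ℝ => x i ^ 2) 2 (Gam m) := by
    refine memLp_finsetSum' _ fun i _ => ?_
    exact hL.comp_measurePreserving (e i)
  have hmean : ∫ x, (∑ i : Fin m, fun x : Fin m → ℝ => x i ^ 2) x ∂(Gam m) = m := by
    simp only [Finset.sum_apply]
    rw [integral_finsetSum]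
    · have : ∀ i : Fin m, ∫ x, x i ^ 2 ∂(Gam m) = 1 := by
        intro i
        rw [← hE, ← integral_map (f := fun y : ℝ => y ^ 2) (φ := fun x : Fin m → ℝ => x i) (measurable_pi_apply i).aemeasurable (by fun_prop)]
        exact congrArg (fun ν => ∫ y, y ^ 2 ∂ν) (e i).map_eq.symm ▸ rfl
      simp [this]
    · intro i _
      exact (hL.comp_measurePreserving (e i)).integrable (by norm_num)
  have hc := meas_ge_le_variance_div_sq hS (c := 2 * (√V + 1) * √m) (by positivity)
  rw [hmean, variance_sum_pi (X := fun _ y => y ^ 2) (fun _ => hL)] at hc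
  simp only [Finset.sum_apply, Finset.sum_const, Finset.card_univ, Fintype.card_fin, nsmul_eq_mul] at hc
  refine hc.trans (ENNReal.ofReal_le_ofReal ?_)
  rw [mul_pow, Real.sq_sqrt hm0.le, div_le_div_iff₀ (by positivity) (by norm_num)]
  have := Real.sq_sqrt hV
  have := Real.sqrt_nonneg V
  change m * V * 4 ≤ _
  nlinarith [mul_nonneg hm0.le this]

lemma pc_nonempty (m : ℕ) : (Finset.powersetCard ((m + 1) / 2) (Finset.univ : Finset (Fin m))).Nonempty := by
  rw [Finset.powersetCard_nonempty, Finset.card_univ, Fintype.card_fin]; omega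

noncomputable def gg (m : ℕ) (x : Fin m → ℝ) : ℝ :=
  (Finset.powersetCard ((m + 1) / 2) Finset.univ).inf' (pc_nonempty m) (fun I => √(∑ i ∈ I, x i ^ 2))

lemma lt_gg {m : ℕ} {x : Fin m → ℝ} {a : ℝ} :
    a < gg m x ↔ ∀ I : Finset (Fin m), I.card = (m + 1) / 2 → a < √(∑ i ∈ I, x i ^ 2) := by
  simp [gg, Finset.lt_inf'_iff, Finset.mem_powersetCard]

lemma gg_lt {m : ℕ} {x : Fin m → ℝ} {a : ℝ} :
    gg m x < a ↔ ∃ I : Finset (Fin m), I.card = (m + 1) / 2 ∧ √(∑ i ∈ I, x i ^ 2) < a := by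
  simp [gg, Finset.inf'_lt_iff, Finset.mem_powersetCard]

lemma gg_meas (m : ℕ) : Measurable (gg m) := by
  unfold gg
  exact (Continuous.finset_inf'_apply (pc_nonempty m) (fun I _ => by fun_prop)).measurable

lemma gg_smul (m : ℕ) (x : Fin m → ℝ) (s : ℝ) (hs : 0 < s) : gg m (fun i => s * x i) = s * gg m x := by
  have h : ∀ I : Finset (Fin m), √(∑ i ∈ I, (s * x i) ^ 2) = s * √(∑ i ∈ I, x i ^ 2) := by
    intro I
    simp_rw [mul_pow]
    rw [← Finset.mul_sum, Real.sqrt_mul (sq_nonneg _), Real.sqrt_sq hs.le]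
  refine le_antisymm (le_of_forall_gt fun a ha => ?_) (le_of_forall_lt fun a ha => ?_)
  · rw [← lt_div_iff₀' hs, gg_lt] at ha
    obtain ⟨I, hI, h2⟩ := ha
    rw [gg_lt]
    refine ⟨I, hI, ?_⟩
    rw [h, ← lt_div_iff₀' hs]; exact h2
  · rw [← div_lt_iff₀' hs, lt_gg] at ha
    rw [lt_gg]
    intro I hI
    rw [h, ← div_lt_iff₀' hs]; exact ha I hI

lemma gg_pos_ae (m : ℕ) (hm : 1 ≤ m) : ∀ᵐ x ∂(Gam m), 0 < gg m x := by
  have : ∀ᵐ x ∂(Gam m), ∀ i : Fin m, x i ≠ 0 := by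
    rw [ae_all_iff]
    intro i
    have e := (measurePreserving_eval (fun _ : Fin m => gaussianReal 0 1) i)
    have : ∀ᵐ y ∂(gaussianReal 0 1), y ≠ 0 := by
      have := nullSingletonClass_gaussianReal (μ := 0) (v := 1) one_ne_zero
      simp [ae_iff]
    exact e.quasiMeasurePreserving.ae this
  filter_upwards [this] with x hx
  rw [lt_gg]
  intro I hI
  apply Real.sqrt_pos.2
  apply Finset.sum_pos (fun i _ => by have := hx i; positivity)
  rw [← Finset.card_pos, hI]; omega

lemma median : ∃ q Q : ℝ, 0 < q ∧ q ≤ Q ∧ gam.real {x | |x| ≤ q} = 1 / 2 ∧ 3 / 4 ≤ gam.real {x | |x| ≤ Q} := by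
  obtain ⟨Q, hQ, h⟩ := tight gam id measurable_id
  have h1 : gam.real {x | Q < |x|} ≤ 1 / 4 := ENNReal.toReal_le_of_le_ofReal (by norm_num) h
  have h2 : 3 / 4 ≤ gam.real {x | |x| ≤ Q} := by
    have := probReal_compl_eq_one_sub (μ := gam) (s := {x : ℝ | Q < |x|}) (measurableSet_lt measurable_const (by fun_prop))
    have e : {x : ℝ | Q < |x|}ᶜ = {x | |x| ≤ Q} := by ext; simp
    rw [e] at this
    linarith
  have hF : ∀ q : ℝ, 0 ≤ q → gam.real {x | |x| ≤ q} = ∫ x in (-q)..q, gaussianPDFReal 0 1 x := by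
    intro q hq
    have e : {x : ℝ | |x| ≤ q} = Set.Icc (-q) q := by ext; simp [abs_le]
    rw [e, Measure.real, gaussianReal_apply_eq_integral _ one_ne_zero, ENNReal.toReal_ofReal
      (integral_nonneg fun x => gaussianPDFReal_nonneg _ _ _), intervalIntegral.integral_of_le (by linarith),
      integral_Icc_eq_integral_Ioc]
  have hi : ∀ a b : ℝ, IntervalIntegrable (gaussianPDFReal 0 1) volume a b := fun a b =>
    (integrable_gaussianPDFReal 0 1).intervalIntegrable
  have hcont : Continuous (fun q : ℝ => ∫ x in (-q)..q, gaussianPDFReal 0 1 x) := by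
    have h1 := intervalIntegral.continuous_primitive hi 0
    have : (fun q : ℝ => ∫ x in (-q)..q, gaussianPDFReal 0 1 x) =
      fun q => (∫ x in (0)..q, gaussianPDFReal 0 1 x) - ∫ x in (0)..(-q), gaussianPDFReal 0 1 x := by
      ext q
      rw [intervalIntegral.integral_interval_sub_left (hi _ _) (hi _ _)]
    rw [this]
    exact h1.sub (h1.comp continuous_neg)
  have := intermediate_value_Icc hQ.le hcont.continuousOn
  have hmem : (1/2 : ℝ) ∈ Set.Icc (∫ x in (-0)..(0:ℝ), gaussianPDFReal 0 1 x) (∫ x in (-Q)..Q, gaussianPDFReal 0 1 x) := by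
    rw [← hF Q hQ.le]
    constructor
    · simp
    · linarith
  obtain ⟨q, hq, hq2⟩ := this hmem
  refine ⟨q, Q, ?_, hq.2, ?_, h2⟩
  · rcases hq.1.lt_or_eq with h | h
    · exact h
    · subst h; simp at hq2
  · rw [hF q hq.1]; exact hq2

lemma small_ball (a : ℝ) (ha : 0 ≤ a) : gam.real {x | |x| ≤ a} ≤ a * √(2 / Real.pi) := by
  have e : {x : ℝ | |x| ≤ a} = Set.Icc (-a) a := by ext; simp [abs_le]
  rw [e, Measure.real, gaussianReal_apply_eq_integral _ one_ne_zero, ENNReal.toReal_ofReal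
      (integral_nonneg fun x => gaussianPDFReal_nonneg _ _ _)]
  calc _ ≤ ∫ x in Set.Icc (-a) a, (√(2 * Real.pi))⁻¹ := by
        apply integral_mono (integrable_gaussianPDFReal 0 1).restrict (integrable_const _)
        intro x
        simp only [gaussianPDFReal, NNReal.coe_one, mul_one, sub_zero]
        apply mul_le_of_le_one_right (by positivity)
        apply Real.exp_le_one_iff.2
        have := sq_nonneg x
        linarith
    _ = _ := by
        simp only [integral_const, MeasurableSet.univ, measureReal_restrict_apply, Set.univ_inter,
          Real.volume_real_Icc, smul_eq_mul]
        rw [max_eq_left (by linarith), Real.sqrt_mul (by norm_num), Real.sqrt_div (by norm_num)]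
        have : √(2:ℝ) * √2 = 2 := Real.mul_self_sqrt (by norm_num)
        have h2 : √(2:ℝ) ≠ 0 := by positivity
        have h3 : √Real.pi ≠ 0 := by positivity
        field_simp
        nlinarith

lemma mu_bound (q : ℝ) (h : gam.real {x | |x| ≤ q} = 1 / 2) :
    ((1 / 18) * √(Real.pi / 2)) ^ 2 ≤ ∫ x, (if |x| ≤ q then x ^ 2 else 0) ∂gam := by
  set a := (1 / 3) * √(Real.pi / 2) with ha
  have ha0 : 0 < a := by positivity
  have hms : ∀ a : ℝ, MeasurableSet {x : ℝ | |x| ≤ a} := fun a => measurableSet_le (by fun_prop) (by fun_prop)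
  have h1 : gam.real {x | |x| ≤ a} ≤ 1 / 3 := by
    refine (small_ball a ha0.le).trans (le_of_eq ?_)
    rw [ha, mul_assoc, ← Real.sqrt_mul (by positivity)]
    have : Real.pi / 2 * (2 / Real.pi) = 1 := by field_simp
    rw [this]; simp
  have h2 : 1 / 6 ≤ gam.real ({x | |x| ≤ q} \ {x | |x| ≤ a}) := by
    have := le_measureReal_sdiff (μ := gam) (s₁ := {x : ℝ | |x| ≤ q}) (s₂ := {x : ℝ | |x| ≤ a})
    linarith
  have h3 : a ^ 2 * gam.real ({x | |x| ≤ q} \ {x | |x| ≤ a}) ≤ ∫ x, (if |x| ≤ q then x ^ 2 else 0) ∂gam := by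
    rw [mul_comm, ← smul_eq_mul, ← integral_indicator_const _ ((hms q).diff (hms a))]
    apply integral_mono
    · exact (integrable_const _).indicator ((hms q).diff (hms a))
    · refine Integrable.of_mem_Icc 0 (q ^ 2) ?_ ?_
      · exact (Measurable.ite (hms q) (by fun_prop) (by fun_prop)).aemeasurable
      · filter_upwards with x
        split_ifs with hx
        · exact ⟨sq_nonneg _, sq_le_sq' (by linarith [abs_le.1 hx]) (abs_le.1 hx).2⟩
        · exact ⟨le_rfl, sq_nonneg _⟩
    · intro x
      by_cases hx : x ∈ ({x : ℝ | |x| ≤ q} \ {x | |x| ≤ a})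
      · rw [Set.indicator_of_mem hx]
        obtain ⟨h5, h6⟩ := hx
        simp only [Set.mem_ofPred_eq, not_le] at h5 h6
        simp only [h5, if_true]
        rw [← sq_abs x]
        gcongr
      · rw [Set.indicator_of_notMem hx]
        show (0:ℝ) ≤ if |x| ≤ q then x ^ 2 else 0
        split_ifs <;> positivity
  have h4 : a ^ 2 = (1/9) * (Real.pi / 2) := by
    rw [ha, mul_pow, Real.sq_sqrt (by positivity)]; norm_num
  rw [mul_pow, Real.sq_sqrt (by positivity)]
  have := Real.pi_pos
  nlinarith

lemma meas_abs (a : ℝ) : MeasurableSet {x : ℝ | |x| ≤ a} := measurableSet_le (by fun_prop) (by fun_prop)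

lemma sq_le_of_abs {x q : ℝ} (h : |x| ≤ q) : x ^ 2 ≤ q ^ 2 :=
  sq_le_sq' (by linarith [abs_le.1 h]) (abs_le.1 h).2

lemma int_sq (q : ℝ) : Integrable (fun x : ℝ => if |x| ≤ q then x ^ 2 else 0) gam := by
  refine Integrable.of_mem_Icc 0 (q ^ 2) ?_ ?_
  · exact (Measurable.ite (meas_abs q) (by fun_prop) (by fun_prop)).aemeasurable
  · filter_upwards with x
    split_ifs with hx
    · exact ⟨sq_nonneg _, sq_le_of_abs hx⟩
    · exact ⟨le_rfl, sq_nonneg _⟩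

lemma int_one (q : ℝ) : ∫ x, (if |x| ≤ q then (1:ℝ) else 0) ∂gam = gam.real {x | |x| ≤ q} := by
  rw [← integral_indicator_one (meas_abs q)]
  rfl

lemma int_one' (q : ℝ) : Integrable (fun x : ℝ => if |x| ≤ q then (1:ℝ) else 0) gam :=
  (integrable_const (1:ℝ)).indicator (meas_abs q)

lemma half_le (m : ℕ) : (m : ℝ) / 2 ≤ (((m + 1) / 2 : ℕ) : ℝ) := by
  have : m ≤ 2 * ((m + 1) / 2) := by omega
  have : (m : ℝ) ≤ 2 * (((m + 1) / 2 : ℕ) : ℝ) := by exact_mod_cast this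
  linarith

lemma le_half (m : ℕ) : (((m + 1) / 2 : ℕ) : ℝ) ≤ (m : ℝ) / 2 + 1 / 2 := by
  have : 2 * ((m + 1) / 2) ≤ m + 1 := by omega
  have : 2 * (((m + 1) / 2 : ℕ) : ℝ) ≤ m + 1 := by exact_mod_cast this
  linarith

lemma lower_tail (q μ : ℝ) (hq : gam.real {x | |x| ≤ q} = 1 / 2)
    (hμ : 0 < μ) (hμ2 : ∫ x, (if |x| ≤ q then x ^ 2 else 0) ∂gam = μ ^ 2)
    (m : ℕ) (hm : 1 ≤ m) (t : ℝ) (ht : 0 ≤ t) (htm : t ≤ √m * μ) :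
    (Gam m).real {x | gg m x ≤ √m * μ - t} ≤ Real.exp (-(2 * μ ^ 2 / q ^ 4 * t ^ 2)) := by
  have hm0 : (0:ℝ) < m := by exact_mod_cast hm
  have hs0 : 0 < √(m:ℝ) := Real.sqrt_pos.2 hm0
  have hss : √(m:ℝ) ^ 2 = m := Real.sq_sqrt hm0.le
  set f : ℝ → ℝ := fun x => if |x| ≤ q then q ^ 2 - x ^ 2 else 0 with hf
  have hfm : Measurable f := Measurable.ite (meas_abs q) (by fun_prop) (by fun_prop)
  have hfb : ∀ x, f x ∈ Set.Icc 0 (q ^ 2) := by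
    intro x
    simp only [hf]
    split_ifs with h
    · have := sq_le_of_abs h
      have := sq_nonneg x
      constructor <;> linarith
    · exact ⟨le_rfl, sq_nonneg _⟩
  have hfi : ∫ x, f x ∂gam = q ^ 2 / 2 - μ ^ 2 := by
    have : f = fun x => q ^ 2 * (if |x| ≤ q then (1:ℝ) else 0) - (if |x| ≤ q then x ^ 2 else 0) := by
      ext x
      simp only [hf]
      split_ifs <;> ring
    rw [this, integral_sub ((int_one' q).const_mul _) (int_sq q), integral_const_mul, int_one, hq, hμ2]
    ring
  have h := hoeff f hfm 0 (q ^ 2) hfb m (√m * μ * t) (by positivity)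
  refine le_trans (measureReal_mono ?_ (measure_ne_top _ _)) (h.trans (le_of_eq ?_))
  · intro x hx
    simp only [Set.mem_ofPred_eq] at hx ⊢
    rw [← not_lt, lt_gg] at hx
    push Not at hx
    obtain ⟨I, hI, h1⟩ := hx
    have h2 : ∑ i ∈ I, x i ^ 2 ≤ (√m * μ - t) ^ 2 := by
      rw [← Real.sqrt_le_left (by linarith)]; exact h1
    have h3 : (I.card : ℝ) * q ^ 2 - ∑ i ∈ I, f (x i) ≤ ∑ i ∈ I, x i ^ 2 := by
      rw [← nsmul_eq_mul, ← Finset.sum_const, ← Finset.sum_sub_distrib]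
      apply Finset.sum_le_sum
      intro i _
      simp only [hf]
      split_ifs with h
      · linarith
      · have : q ≤ |x i| := by linarith [not_le.1 h]
        by_cases hq0 : 0 ≤ q
        · rw [← sq_abs (x i)]; nlinarith
        · exfalso
          have : {x : ℝ | |x| ≤ q} = ∅ := by
            ext y; simp only [Set.mem_ofPred_eq, Set.mem_empty_iff_false, iff_false]
            have := abs_nonneg y
            linarith
          rw [this] at hq; simp at hq
    have h4 : ∑ i ∈ I, f (x i) ≤ ∑ i, f (x i) :=
      Finset.sum_le_sum_of_subset_of_nonneg (Finset.subset_univ _) (fun i _ _ => (hfb _).1)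
    rw [Finset.sum_sub_distrib, hfi]
    simp only [Finset.sum_const, Finset.card_univ, Fintype.card_fin, nsmul_eq_mul]
    rw [hI] at h3
    have h5 := mul_le_mul_of_nonneg_right (half_le m) (sq_nonneg q)
    have h6 : t * t ≤ t * (√m * μ) := by gcongr
    nlinarith
  · congr 2
    rw [sub_zero, mul_pow, mul_pow, hss]
    field_simp

lemma upper_tail (q Q μ : ℝ) (hq0 : 0 < q) (hqQ : q ≤ Q) (hq : gam.real {x | |x| ≤ q} = 1 / 2)
    (hQ : 3 / 4 ≤ gam.real {x | |x| ≤ Q})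
    (hμ : 0 < μ) (hμ2 : ∫ x, (if |x| ≤ q then x ^ 2 else 0) ∂gam = μ ^ 2)
    (m : ℕ) (hm : 1 ≤ m) (t : ℝ) (ht : Q ^ 2 ≤ μ * t) (htm : t ≤ √m * μ) :
    (Gam m).real {x | √m * μ + t ≤ gg m x} ≤ Real.exp (-(μ ^ 2 / (2 * q ^ 4) * t ^ 2)) +
      Real.exp (-(μ ^ 2 / (2 * Q ^ 4) * t ^ 2)) + Real.exp (-(1 / (8 * μ ^ 2) * t ^ 2)) := by
  have hm0 : (0:ℝ) < m := by exact_mod_cast hm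
  have hs0 : 0 < √(m:ℝ) := Real.sqrt_pos.2 hm0
  have hs1 : 1 ≤ √(m:ℝ) := Real.one_le_sqrt.2 (by exact_mod_cast hm)
  have hss : √(m:ℝ) ^ 2 = m := Real.sq_sqrt hm0.le
  have hQ0 : 0 < Q := by linarith
  have ht0 : 0 < t := by
    by_contra h
    have : 0 < Q ^ 2 := by positivity
    nlinarith
  set f1 : ℝ → ℝ := fun x => if |x| ≤ q then x ^ 2 else 0 with hf1
  set f2 : ℝ → ℝ → ℝ := fun r x => if |x| ≤ r then -1 else 0 with hf2
  have hf1m : Measurable f1 := Measurable.ite (meas_abs q) (by fun_prop) (by fun_prop)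
  have hf2m : ∀ r, Measurable (f2 r) := fun r => Measurable.ite (meas_abs r) (by fun_prop) (by fun_prop)
  have hf1b : ∀ x, f1 x ∈ Set.Icc 0 (q ^ 2) := by
    intro x
    simp only [hf1]
    split_ifs with h
    · exact ⟨sq_nonneg _, sq_le_of_abs h⟩
    · exact ⟨le_rfl, sq_nonneg _⟩
  have hf2b : ∀ r x, f2 r x ∈ Set.Icc (-1) 0 := by
    intro r x
    simp only [hf2]
    split_ifs <;> simp
  have hf2i : ∀ r, ∫ x, f2 r x ∂gam = - gam.real {x | |x| ≤ r} := by
    intro r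
    rw [← int_one, ← integral_neg]
    congr 1
    ext x
    simp only [hf2]
    split_ifs <;> simp
  have hsum : ∀ (r : ℝ) (x : Fin m → ℝ), ∑ i, f2 r (x i) =
      -((Finset.univ.filter fun i => |x i| ≤ r).card : ℝ) := by
    intro r x
    simp only [hf2]
    rw [← Finset.sum_filter]
    simp
  have b1 := hoeff f1 hf1m 0 (q ^ 2) hf1b m (√m * μ * t / 2) (by positivity)
  have b2 := hoeff (f2 q) (hf2m q) (-1) 0 (hf2b q) m (√m * μ * t / (2 * Q ^ 2)) (by positivity)
  have b3 := hoeff (f2 Q) (hf2m Q) (-1) 0 (hf2b Q) m (m / 4) (by positivity)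
  have c1 : -(2 * (√m * μ * t / 2) ^ 2 / (m * (q ^ 2 - 0) ^ 2)) = -(μ ^ 2 / (2 * q ^ 4) * t ^ 2) := by
    rw [sub_zero, div_pow, mul_pow, mul_pow, hss]
    field_simp
  have c2 : -(2 * (√m * μ * t / (2 * Q ^ 2)) ^ 2 / (m * (0 - (-1) : ℝ) ^ 2)) =
      -(μ ^ 2 / (2 * Q ^ 4) * t ^ 2) := by
    rw [div_pow, mul_pow, mul_pow, hss]
    field_simp
    ring
  have c3 : -(2 * ((m:ℝ) / 4) ^ 2 / (m * (0 - (-1) : ℝ) ^ 2)) ≤ -(1 / (8 * μ ^ 2) * t ^ 2) := by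
    have : t ^ 2 ≤ m * μ ^ 2 := by
      calc t ^ 2 ≤ (√m * μ) ^ 2 := by gcongr
        _ = _ := by rw [mul_pow, hss]
    have e : 2 * ((m:ℝ) / 4) ^ 2 / (m * (0 - (-1) : ℝ) ^ 2) = m / 8 := by field_simp; ring
    rw [e, neg_le_neg_iff, one_div, inv_mul_le_iff₀ (by positivity)]
    linarith
  rw [c1] at b1
  rw [c2] at b2
  have b3' := b3.trans (Real.exp_le_exp.2 c3)
  refine le_trans ?_ (add_le_add (add_le_add b1 b2) b3')
  refine le_trans ?_ (add_le_add_left (measureReal_union_le _ _) _)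
  refine le_trans ?_ (measureReal_union_le _ _)
  refine measureReal_mono ?_ (measure_ne_top _ _)
  intro x hx
  by_contra hcon
  simp only [Set.mem_union, Set.mem_ofPred_eq, not_or, not_le, Finset.sum_sub_distrib, hsum, hf2i, hμ2,
    Finset.sum_const, Finset.card_univ, Fintype.card_fin, nsmul_eq_mul, hq] at hcon hx
  obtain ⟨⟨e1, e2⟩, e3⟩ := hcon
  rw [← not_lt, gg_lt] at hx
  apply hx
  set S := (Finset.univ.filter fun i => |x i| ≤ q) with hS
  set T := (Finset.univ.filter fun i => |x i| ≤ Q) with hT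
  set k := (m + 1) / 2 with hk
  have hST : S ⊆ T := by
    intro i hi
    simp only [hS, hT, Finset.mem_filter, Finset.mem_univ, true_and] at *
    linarith
  have hTk : k ≤ T.card := by
    have : (m : ℝ) / 2 < T.card := by nlinarith
    have : (m : ℝ) < 2 * T.card := by linarith
    have : m < 2 * T.card := by exact_mod_cast this
    omega
  have hf1s : ∑ i, f1 (x i) = ∑ i ∈ S, x i ^ 2 := by
    rw [hS, Finset.sum_filter]
  have fin : ∃ I : Finset (Fin m), I.card = k ∧ ∑ i ∈ I, x i ^ 2 ≤ ∑ i ∈ S, x i ^ 2 + max 0 ((k:ℝ) - S.card) * Q ^ 2 := by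
    rcases le_total k S.card with h | h
    · obtain ⟨I, hIS, hI⟩ := Finset.exists_subset_card_eq h
      refine ⟨I, hI, ?_⟩
      have := Finset.sum_le_sum_of_subset_of_nonneg hIS (f := fun i => x i ^ 2) (fun i _ _ => sq_nonneg _)
      have h2 : 0 ≤ max 0 ((k:ℝ) - S.card) * Q ^ 2 := by positivity
      linarith
    · obtain ⟨I, hSI, hIT, hI⟩ := Finset.exists_subsuperset_card_eq hST h hTk
      refine ⟨I, hI, ?_⟩
      rw [← Finset.sum_sdiff hSI, add_comm]
      gcongr
      calc ∑ i ∈ I \ S, x i ^ 2 ≤ ∑ i ∈ I \ S, Q ^ 2 := by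
            apply Finset.sum_le_sum
            intro i hi
            have := hIT (Finset.mem_sdiff.1 hi).1
            simp only [hT, Finset.mem_filter, Finset.mem_univ, true_and] at this
            exact sq_le_of_abs this
        _ = ((k:ℝ) - S.card) * Q ^ 2 := by
            rw [Finset.sum_const, nsmul_eq_mul, Finset.card_sdiff_of_subset hSI, hI, Nat.cast_sub h]
        _ ≤ _ := by gcongr; exact le_max_right _ _
  obtain ⟨I, hI, h⟩ := fin
  refine ⟨I, hI, ?_⟩
  rw [Real.sqrt_lt' (by positivity)]
  have hk2 := le_half m
  rw [← hk] at hk2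
  have hmt : √m * μ * t ≥ Q ^ 2 := by
    calc Q ^ 2 ≤ μ * t := ht
      _ ≤ √m * (μ * t) := le_mul_of_one_le_left (by positivity) hs1
      _ = _ := by ring
  have hmax : max 0 ((k:ℝ) - S.card) * Q ^ 2 ≤ (1 / 2 + √m * μ * t / (2 * Q ^ 2)) * Q ^ 2 := by
    gcongr
    apply max_le (by positivity)
    linarith
  have e4 : (1 / 2 + √m * μ * t / (2 * Q ^ 2)) * Q ^ 2 = Q ^ 2 / 2 + √m * μ * t / 2 := by
    field_simp
  rw [hf1s] at e1
  have : 0 < Q ^ 2 := by positivity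
  nlinarith [sq_nonneg t]

def AA (m : ℕ) (μ t : ℝ) : Set (Fin m → ℝ) := {x | √m * μ - t < gg m x ∧ gg m x < √m * μ + t}

lemma AA_meas (m : ℕ) (μ t : ℝ) : MeasurableSet (AA m μ t) :=
  (measurableSet_lt measurable_const (gg_meas m)).inter (measurableSet_lt (gg_meas m) measurable_const)

lemma conc (q Q μ : ℝ) (hq0 : 0 < q) (hqQ : q ≤ Q) (hq : gam.real {x | |x| ≤ q} = 1 / 2)
    (hQ : 3 / 4 ≤ gam.real {x | |x| ≤ Q})
    (hμ : 0 < μ) (hμ2 : ∫ x, (if |x| ≤ q then x ^ 2 else 0) ∂gam = μ ^ 2) :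
    ∃ T c : ℝ, 0 < T ∧ 0 < c ∧ Real.exp (-(c * T ^ 2)) ≤ 1 / 4 ∧ ∀ m : ℕ, 1 ≤ m → ∀ t, T ≤ t → t ≤ √m * μ →
      (Gam m).real (AA m μ t)ᶜ ≤ Real.exp (-(c * t ^ 2)) := by
  have hQ0 : 0 < Q := by linarith
  obtain ⟨d, hd, d1, d2, d3, d4⟩ : ∃ d : ℝ, 0 < d ∧ d ≤ 2 * μ ^ 2 / q ^ 4 ∧ d ≤ μ ^ 2 / (2 * q ^ 4) ∧
      d ≤ μ ^ 2 / (2 * Q ^ 4) ∧ d ≤ 1 / (8 * μ ^ 2) :=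
    ⟨min (min (2 * μ ^ 2 / q ^ 4) (μ ^ 2 / (2 * q ^ 4))) (min (μ ^ 2 / (2 * Q ^ 4)) (1 / (8 * μ ^ 2))),
      by positivity, by simp, by simp, by simp, by simp⟩
  have hl4 : (0:ℝ) < Real.log 4 := Real.log_pos (by norm_num)
  set T := max (Q ^ 2 / μ) √(2 * Real.log 4 / d) with hT
  have hT0 : 0 < T := lt_max_of_lt_left (by positivity)
  have hTd : ∀ t, T ≤ t → Real.log 4 ≤ d / 2 * t ^ 2 := by
    intro t ht
    have h1 : √(2 * Real.log 4 / d) ≤ t := (le_max_right _ _).trans ht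
    have h2 : 2 * Real.log 4 / d ≤ t ^ 2 := (Real.sqrt_le_left (by linarith)).1 h1
    rw [div_le_iff₀ hd] at h2
    linarith
  have h4 : ∀ t, T ≤ t → Real.exp (-(d / 2 * t ^ 2)) ≤ 1 / 4 := by
    intro t ht
    have := hTd t ht
    calc Real.exp (-(d / 2 * t ^ 2)) ≤ Real.exp (-Real.log 4) := Real.exp_le_exp.2 (by linarith)
      _ = 1 / 4 := by rw [Real.exp_neg, Real.exp_log (by norm_num)]; norm_num
  refine ⟨T, d / 2, hT0, by positivity, h4 T le_rfl, fun m hm t ht htm => ?_⟩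
  have ht0 : 0 < t := by linarith
  have l := lower_tail q μ hq hμ hμ2 m hm t ht0.le htm
  have u := upper_tail q Q μ hq0 hqQ hq hQ hμ hμ2 m hm t
    (by rw [← div_le_iff₀' hμ]; exact (le_max_left _ _).trans ht) htm
  have hsub : (AA m μ t)ᶜ ⊆ {x | gg m x ≤ √m * μ - t} ∪ {x | √m * μ + t ≤ gg m x} := by
    intro x hx
    simp only [AA, Set.mem_compl_iff, Set.mem_ofPred_eq, not_and_or, not_lt] at hx
    exact hx
  have h5 := (measureReal_mono hsub (measure_ne_top _ _)).trans (measureReal_union_le (μ := Gam m) _ _)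
  have ex : ∀ e, d ≤ e → Real.exp (-(e * t ^ 2)) ≤ Real.exp (-(d * t ^ 2)) := by
    intro e he
    apply Real.exp_le_exp.2
    have := mul_le_mul_of_nonneg_right he (sq_nonneg t)
    linarith
  have e1 := ex _ d1
  have e2 := ex _ d2
  have e3 := ex _ d3
  have e4 := ex _ d4
  have e5 : Real.exp (-(d * t ^ 2)) = Real.exp (-(d / 2 * t ^ 2)) * Real.exp (-(d / 2 * t ^ 2)) := by
    rw [← Real.exp_add]; congr 1; ring
  have e6 := h4 t ht
  have e7 := Real.exp_pos (-(d / 2 * t ^ 2))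
  nlinarith

noncomputable def aa (m : ℕ) (μ : ℝ) (x : Fin m → ℝ) : ℝ := √m * Real.log (√m * μ / gg m x)

lemma aa_tight (μ T c : ℝ) (hμ : 0 < μ) (hT : 0 < T) (h14 : Real.exp (-(c * T ^ 2)) ≤ 1 / 4)
    (h : ∀ m : ℕ, 1 ≤ m → ∀ t, T ≤ t → t ≤ √m * μ →
      (Gam m).real (AA m μ t)ᶜ ≤ Real.exp (-(c * t ^ 2))) :
    ∃ L : ℝ, 0 < L ∧ ∀ m : ℕ, 1 ≤ m → Gam m {x | L < |aa m μ x|} ≤ ENNReal.ofReal (1 / 4) := by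
  have hmeas : ∀ m, Measurable (aa m μ) := fun m => by
    have := gg_meas m
    unfold aa
    fun_prop
  choose L hL0 hL using fun m : ℕ => tight (Gam m) (aa m μ) (hmeas m)
  obtain ⟨m0, hm0⟩ := exists_nat_ge ((2 * T / μ) ^ 2)
  set M := ∑ i ∈ Finset.range m0, L i with hM
  have hM0 : 0 ≤ M := Finset.sum_nonneg fun i _ => (hL0 i).le
  refine ⟨max M (2 * T / μ), lt_max_of_lt_right (by positivity), fun m hm => ?_⟩
  by_cases hmm : m < m0
  · refine le_trans (measure_mono ?_) (hL m)
    intro x hx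
    simp only [Set.mem_ofPred_eq] at hx ⊢
    refine lt_of_le_of_lt ?_ hx
    refine le_trans ?_ (le_max_left _ _)
    exact Finset.single_le_sum (f := L) (fun i _ => (hL0 i).le) (Finset.mem_range.2 hmm)
  · have hmr : (0:ℝ) < m := by exact_mod_cast hm
    have hs0 : 0 < √(m:ℝ) := Real.sqrt_pos.2 hmr
    have hbig : 2 * T ≤ √m * μ := by
      rw [← div_le_iff₀ hμ]
      apply Real.le_sqrt_of_sq_le
      exact hm0.trans (by exact_mod_cast not_lt.1 hmm)
    have h1 := (h m hm T le_rfl (by linarith)).trans h14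
    refine le_trans (measure_mono ?_) ((ENNReal.le_ofReal_iff_toReal_le (measure_ne_top _ _) (by norm_num)).2 h1)
    intro x hx hxA
    obtain ⟨ha, hb⟩ := hxA
    simp only [Set.mem_ofPred_eq] at hx
    rw [← not_le] at hx
    apply hx
    refine le_trans ?_ (le_max_right _ _)
    have hg : 0 < gg m x := by linarith
    have hsm : 0 < √m * μ := by positivity
    rw [aa, abs_mul, abs_of_pos hs0, ← le_div_iff₀' hs0, abs_le]
    have k1 : Real.log (√m * μ / gg m x) ≤ 2 * T / μ / √m := by
      refine (Real.log_le_sub_one_of_pos (by positivity)).trans ?_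
      rw [div_div, div_sub_one hg.ne', div_le_div_iff₀ hg (by positivity)]
      nlinarith
    have k2 : -Real.log (√m * μ / gg m x) ≤ 2 * T / μ / √m := by
      rw [← Real.log_inv, inv_div]
      refine (Real.log_le_sub_one_of_pos (by positivity)).trans ?_
      rw [div_div, div_sub_one hsm.ne', div_le_div_iff₀ hsm (by positivity)]
      nlinarith
    constructor <;> linarith

lemma small_t (μ T L K : ℝ) (hμ : 0 < μ) (hT : 0 < T) (hL0 : 0 < L) (hK0 : 0 < K)
    (hL : ∀ m : ℕ, 1 ≤ m → Gam m {x | L < |aa m μ x|} ≤ ENNReal.ofReal (1 / 4))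
    (hK : ∀ m : ℕ, 1 ≤ m → Gam m {x | K * √m ≤ |∑ i, x i ^ 2 - m|} ≤ ENNReal.ofReal (1/4)) :
    ∃ c : ℝ, 0 < c ∧ ∀ m : ℕ, 1 ≤ m → ∀ t, 0 < t → t ≤ T → c * t ≤ (Gam m).real (AA m μ t) := by
  set L' := L + T / μ with hL'
  have hL'0 : 0 < L' := by positivity
  set K' := Real.exp (2 * L') * K + 2 * L' * Real.exp (2 * L') with hK'
  set C := Real.exp (L' * K') with hC
  have hC0 : 0 < C := Real.exp_pos _
  set D := 2 * L * μ + 3 * T with hD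
  have hD0 : 0 < D := by positivity
  refine ⟨1 / (2 * C * D), by positivity, fun m hm t ht htT => ?_⟩
  have hmr : (1:ℝ) ≤ m := by exact_mod_cast hm
  have hm0 : (0:ℝ) < m := by linarith
  have hs0 : 0 < √(m:ℝ) := Real.sqrt_pos.2 hm0
  have hs1 : 1 ≤ √(m:ℝ) := Real.one_le_sqrt.2 hmr
  have hss : √(m:ℝ) * √m = m := Real.mul_self_sqrt hm0.le
  set η := t / μ with hη
  have hη0 : 0 < η := by positivity
  have hηT : η ≤ T / μ := by rw [hη]; gcongr
  set E := AA m μ t ∩ {y | |∑ i, y i ^ 2 - m| ≤ K' * √m} with hE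
  have hEm : MeasurableSet E := (AA_meas m μ t).inter (measurableSet_le (by fun_prop) (by fun_prop))
  set J := Finset.Icc ⌊-L / η⌋ ⌊L / η⌋ with hJ
  have hJa : ∀ j ∈ J, |(j:ℝ) * η| ≤ L' := by
    intro j hj
    rw [hJ, Finset.mem_Icc] at hj
    have h1 : (j:ℝ) ≤ L / η := Int.le_floor.1 hj.2
    have h2 : -L / η - 1 < (j:ℝ) := lt_of_lt_of_le (Int.sub_one_lt_floor _) (by exact_mod_cast hj.1)
    rw [le_div_iff₀ hη0] at h1
    rw [div_sub_one hη0.ne', div_lt_iff₀ hη0] at h2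
    rw [abs_le]
    constructor <;> linarith [show 0 < T / μ by positivity]
  have hJc : (J.card : ℝ) ≤ D / t := by
    rw [hJ, Int.card_Icc]
    have h1 : (⌊L / η⌋:ℝ) ≤ L / η := Int.floor_le _
    have h2 : -L / η - 1 < (⌊-L / η⌋:ℝ) := Int.sub_one_lt_floor _
    have h3 : (((⌊L / η⌋ + 1 - ⌊-L / η⌋).toNat : ℤ) : ℝ) = ((⌊L / η⌋ + 1 - ⌊-L / η⌋ : ℤ) : ℝ) := by
      congr 1
      apply Int.toNat_of_nonneg
      have : ⌊-L / η⌋ ≤ ⌊L / η⌋ := Int.floor_le_floor (by gcongr; linarith)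
      omega
    have h4 : (((⌊L / η⌋ + 1 - ⌊-L / η⌋).toNat : ℕ) : ℝ) = ((⌊L / η⌋ + 1 - ⌊-L / η⌋ : ℤ) : ℝ) := by
      rw [← h3]; norm_cast
    rw [h4]
    push_cast
    have h5 : -L / η = -(L / η) := by ring
    have h6 : L / η = L * μ / t := by rw [hη]; field_simp
    have h7 : D / t = 2 * (L * μ / t) + 3 * (T / t) := by rw [hD]; field_simp
    have h8 : 1 ≤ T / t := by rw [one_le_div ht]; exact htT
    rw [h5] at h2 ⊢
    rw [h7, ← h6]
    linarith
  have hcover : ∀ x : Fin m → ℝ, 0 < gg m x → |aa m μ x| ≤ L → |∑ i, x i ^ 2 - m| ≤ K * √m →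
      ∃ j ∈ J, (fun i => Real.exp (((j:ℝ) * η) / √m) * x i) ∈ E := by
    intro x hg ha hn
    set a := aa m μ x with haa
    have hj1 : (⌊a / η⌋ : ℝ) * η ≤ a := by rw [← le_div_iff₀ hη0]; exact Int.floor_le _
    have hj2 : a < ((⌊a / η⌋ : ℝ) + 1) * η := by rw [← div_lt_iff₀ hη0]; exact Int.lt_floor_add_one _
    have hjJ : ⌊a / η⌋ ∈ J := by
      rw [hJ, Finset.mem_Icc]
      constructor
      · apply Int.floor_le_floor; gcongr; exact (abs_le.1 ha).1
      · apply Int.floor_le_floor; gcongr; exact (abs_le.1 ha).2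
    have hjb := hJa _ hjJ
    refine ⟨_, hjJ, ?_, ?_⟩
    · set b := (⌊a / η⌋ : ℝ) * η with hb
      have hgx : gg m x = √m * μ * Real.exp (-(a / √m)) := by
        have : a / √m = Real.log (√m * μ / gg m x) := by rw [haa, aa]; field_simp
        rw [this, ← Real.log_inv, Real.exp_log (by positivity)]
        field_simp
      have hgs : gg m (fun i => Real.exp (b / √m) * x i) = √m * μ * Real.exp ((b - a) / √m) := by
        rw [gg_smul _ _ _ (Real.exp_pos _), hgx, sub_div, sub_eq_add_neg, Real.exp_add]; ring
      have hle : Real.exp ((b - a) / √m) ≤ 1 :=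
        Real.exp_le_one_iff.2 (div_nonpos_of_nonpos_of_nonneg (by linarith) hs0.le)
      have hge : 1 - η / √m < Real.exp ((b - a) / √m) := by
        have h1 := Real.add_one_le_exp ((b - a) / √m)
        have h2 : -η / √m < (b - a) / √m := by gcongr; linarith
        rw [neg_div] at h2
        linarith
      show _ < gg m _ ∧ gg m _ < _
      rw [hgs]
      have hsm : 0 < √m * μ := by positivity
      constructor
      · calc √m * μ - t = √m * μ * (1 - η / √m) := by rw [hη]; field_simp
          _ < _ := by gcongr
      · have : √m * μ * Real.exp ((b - a) / √m) ≤ √m * μ * 1 := by gcongr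
        linarith
    · set b := (⌊a / η⌋ : ℝ) * η with hb
      show |∑ i, (Real.exp (b / √m) * x i) ^ 2 - m| ≤ K' * √m
      simp_rw [mul_pow]
      rw [← Finset.mul_sum]
      set w := Real.exp (b / √m) ^ 2 with hw
      have hw1 : w = Real.exp (2 * b / √m) := by
        rw [hw, ← Real.exp_nat_mul]; congr 1; push_cast; ring
      have hbs : |2 * b / √m| ≤ 2 * L' / √m := by
        rw [abs_div, abs_of_pos hs0, abs_mul, abs_two]; gcongr
      have hbs' : 2 * L' / √m ≤ 2 * L' := div_le_self (by positivity) hs1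
      have hw2 : w ≤ Real.exp (2 * L') := by
        rw [hw1]
        exact Real.exp_le_exp.2 ((le_abs_self _).trans (hbs.trans hbs'))
      have hw0 : 0 < w := by positivity
      have hE1 : 1 ≤ Real.exp (2 * L') := Real.one_le_exp (by positivity)
      have hw3 : |w - 1| ≤ 2 * L' / √m * Real.exp (2 * L') := by
        set z := 2 * b / √m with hz
        have hp : 0 ≤ 2 * L' / √m := by positivity
        have hz1 := abs_le.1 hbs
        rw [abs_le]
        constructor
        · have := Real.add_one_le_exp z
          rw [← hw1] at this
          nlinarith
        · have h1 := Real.add_one_le_exp (-z)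
          have h2 : Real.exp (-z) * w = 1 := by rw [hw1, ← Real.exp_add]; simp
          have h3 : w - 1 ≤ z * w := by nlinarith
          calc w - 1 ≤ z * w := h3
            _ ≤ 2 * L' / √m * w := by gcongr; exact hz1.2
            _ ≤ _ := by gcongr
      have hsplit : w * ∑ i, x i ^ 2 - m = w * (∑ i, x i ^ 2 - m) + m * (w - 1) := by ring
      rw [hsplit]
      calc _ ≤ |w * (∑ i, x i ^ 2 - m)| + |m * (w - 1)| := abs_add_le _ _
        _ = w * |∑ i, x i ^ 2 - m| + m * |w - 1| := by rw [abs_mul, abs_mul, abs_of_pos hw0, abs_of_pos hm0]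
        _ ≤ Real.exp (2 * L') * (K * √m) + m * (2 * L' / √m * Real.exp (2 * L')) := by gcongr
        _ = K' * √m := by
          have : (m:ℝ) * (2 * L' / √m * Real.exp (2 * L')) = √m * (2 * L' * Real.exp (2 * L')) := by
            nth_rewrite 1 [← hss]; field_simp
          rw [this, hK']; ring
  -- measure estimate
  have hU : (1:ENNReal) ≤ ENNReal.ofReal (1/4) + ENNReal.ofReal (1/4) +
      ∑ j ∈ J, Gam m {x | (fun i => Real.exp (((j:ℝ) * η) / √m) * x i) ∈ E} := by
    have hz : Gam m {x | ¬ 0 < gg m x} = 0 := gg_pos_ae m hm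
    have h1 : (Set.univ : Set (Fin m → ℝ)) ⊆ {x | ¬ 0 < gg m x} ∪ ({x | L < |aa m μ x|} ∪
        {x | K * √m ≤ |∑ i, x i ^ 2 - m|} ∪
        ⋃ j ∈ J, {x | (fun i => Real.exp (((j:ℝ) * η) / √m) * x i) ∈ E}) := by
      intro x _
      by_contra hcon
      simp only [Set.mem_union, not_or, Set.mem_ofPred_eq, not_not, not_lt, not_le, Set.mem_iUnion,
        not_exists] at hcon
      obtain ⟨p1, ⟨p2, p3⟩, p4⟩ := hcon
      obtain ⟨j, hj, hjE⟩ := hcover x p1 p2 p3.le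
      exact p4 j hj hjE
    calc (1:ENNReal) = Gam m Set.univ := by simp
      _ ≤ _ := measure_mono h1
      _ ≤ _ := measure_union_le _ _
      _ ≤ _ := by
        rw [hz, zero_add]
        refine (measure_union_le _ _).trans ?_
        gcongr
        · refine (measure_union_le _ _).trans ?_
          gcongr
          · exact hL m hm
          · exact hK m hm
        · exact measure_biUnion_finset_le _ _
  have hU2 : ∑ j ∈ J, Gam m {x | (fun i => Real.exp (((j:ℝ) * η) / √m) * x i) ∈ E} ≤
      ENNReal.ofReal (J.card * (C * (Gam m).real (AA m μ t))) := by
    calc _ ≤ ∑ j ∈ J, ENNReal.ofReal C * Gam m (AA m μ t) := by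
          apply Finset.sum_le_sum
          intro j hj
          refine (scale m hm _ L' K' (hJa j hj) E hEm (fun y hy => hy.2)).trans ?_
          gcongr
          exact Set.inter_subset_left
      _ = _ := by
          rw [Finset.sum_const, nsmul_eq_mul, ENNReal.ofReal_mul (by positivity),
            ENNReal.ofReal_mul hC0.le, ENNReal.ofReal_natCast, ofReal_measureReal]
  have hU3 : (1:ℝ) ≤ 1/4 + 1/4 + J.card * (C * (Gam m).real (AA m μ t)) := by
    have := hU.trans (add_le_add_right hU2 _)
    rw [← ENNReal.ofReal_add (by norm_num) (by norm_num), ← ENNReal.ofReal_add (by norm_num) (by positivity)] at this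
    exact ENNReal.one_le_ofReal.1 this
  set p := (Gam m).real (AA m μ t) with hp
  have hp0 : 0 ≤ p := measureReal_nonneg
  have h9 : J.card * (C * p) ≤ D / t * (C * p) := by gcongr
  have h10 : 1 / 2 ≤ D / t * (C * p) := by linarith
  rw [div_mul_eq_mul_div, le_div_iff₀ ht] at h10
  rw [div_mul_eq_mul_div, one_mul, div_le_iff₀ (by positivity)]
  linarith

/-- For i.i.d. standard normals `X₁,…,X_m`, there exist a constant `μ ≥ (1/18)√(π/2)`
and a universal `c > 0` such that for every `0 ≤ ε ≤ μ`, with probability at least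
`1 − e^{−c m ε²}`:
`√m (μ − ε) < (∑_{i=1}^{⌈m/2⌉} |X|_{(i)}²)^{1/2} < √m (μ + ε)`, where the sum is over
the `⌈m/2⌉` smallest of the squared absolute values.  Equivalently (as stated here),
every subset of `⌈m/2⌉` coordinates has squared sum exceeding `m(μ − ε)²`, and some
subset of `⌈m/2⌉` coordinates has square-rooted sum below `√m (μ + ε)`. -/
theorem stmt_4 :
    ∃ μ c : ℝ, (1 / 18) * Real.sqrt (Real.pi / 2) ≤ μ ∧ 0 < c ∧
      ∀ (m : ℕ) (Ω : Type) [MeasurableSpace Ω] (P : Measure Ω),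
        IsProbabilityMeasure P →
        ∀ X : Ω → Fin m → ℝ, Measurable X → IIDStdGaussianVec P m X →
        ∀ ε : ℝ, 0 ≤ ε → ε ≤ μ →
        P {ω |
            (∀ I : Finset (Fin m), I.card = (m + 1) / 2 →
              Real.sqrt m * (μ - ε) < Real.sqrt (∑ i ∈ I, (X ω i) ^ 2)) ∧
            (∃ I : Finset (Fin m), I.card = (m + 1) / 2 ∧
              Real.sqrt (∑ i ∈ I, (X ω i) ^ 2) < Real.sqrt m * (μ + ε))} ≥
          ENNReal.ofReal (1 - Real.exp (-c * m * ε ^ 2)) := by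
  obtain ⟨q, Q, hq0, hqQ, hq, hQ⟩ := median
  have hb := mu_bound q hq
  set V := ∫ x, (if |x| ≤ q then x ^ 2 else 0) ∂gam with hV
  have hV0 : 0 ≤ V := (sq_nonneg _).trans hb
  have hμb : (1 / 18) * Real.sqrt (Real.pi / 2) ≤ √V := Real.le_sqrt_of_sq_le hb
  have hμ : 0 < √V := lt_of_lt_of_le (by positivity) hμb
  have hμ2 : V = √V ^ 2 := (Real.sq_sqrt hV0).symm
  obtain ⟨T, c1, hT, hc1, h14, hconc⟩ := conc q Q (√V) hq0 hqQ hq hQ hμ hμ2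
  obtain ⟨L, hL0, hL⟩ := aa_tight (√V) T c1 hμ hT h14 hconc
  obtain ⟨K, hK0, hK⟩ := cheb
  obtain ⟨c2, hc2, hsm⟩ := small_t (√V) T L K hμ hT hL0 hK0 hL hK
  refine ⟨√V, min c1 (c2 / T), hμb, by positivity, ?_⟩
  intro m Ω _ P _ X hX hlaw ε hε hεμ
  set μ := √V
  set c := min c1 (c2 / T) with hc
  have hcc1 : c ≤ c1 := min_le_left _ _
  have hcc2 : c ≤ c2 / T := min_le_right _ _
  have hc0 : 0 < c := by positivity
  rcases Nat.eq_zero_or_pos m with rfl | hm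
  · simp
  have hm0 : (0:ℝ) < m := by exact_mod_cast hm
  have hs0 : 0 < √(m:ℝ) := Real.sqrt_pos.2 hm0
  have hss : √(m:ℝ) ^ 2 = m := Real.sq_sqrt hm0.le
  set t := √m * ε with ht
  have hset : {ω | (∀ I : Finset (Fin m), I.card = (m + 1) / 2 →
              Real.sqrt m * (μ - ε) < Real.sqrt (∑ i ∈ I, (X ω i) ^ 2)) ∧
            (∃ I : Finset (Fin m), I.card = (m + 1) / 2 ∧
              Real.sqrt (∑ i ∈ I, (X ω i) ^ 2) < Real.sqrt m * (μ + ε))} = X ⁻¹' (AA m μ t) := by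
    ext ω
    simp only [AA, Set.mem_ofPred_eq, Set.mem_preimage, ← lt_gg, ← gg_lt, ht]
    rw [mul_sub, mul_add]
  rw [hset, ← Measure.map_apply hX (AA_meas m μ t), hlaw, ge_iff_le, ← ofReal_measureReal]
  apply ENNReal.ofReal_le_ofReal
  have hexp : -c * m * ε ^ 2 = -(c * t ^ 2) := by rw [ht, mul_pow, hss]; ring
  rw [hexp]
  have htm : t ≤ √m * μ := by rw [ht]; gcongr
  have ht0 : 0 ≤ t := by positivity
  rcases le_total T t with h | h
  · have h1 := hconc m hm t h htm
    rw [probReal_compl_eq_one_sub (AA_meas m μ t)] at h1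
    have h2 : Real.exp (-(c1 * t ^ 2)) ≤ Real.exp (-(c * t ^ 2)) := by
      apply Real.exp_le_exp.2
      have := mul_le_mul_of_nonneg_right hcc1 (sq_nonneg t)
      linarith
    linarith
  · rcases ht0.eq_or_lt with h0 | h0
    · rw [← h0]; simp
    · have h1 := hsm m hm t h0 h
      refine le_trans ?_ h1
      have h2 := Real.add_one_le_exp (-(c * t ^ 2))
      have h3 : c * t ^ 2 ≤ c2 * t := by
        calc c * t ^ 2 = c * t * t := by ring
          _ ≤ c2 / T * T * t := by gcongr
          _ = c2 * t := by field_simp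
      linarith
end

section
/- Let a ~ N(0, I_n) be a standard Gaussian vector in ℝ^n, let s̄ ∈ ℝ^n be a unit vector, and let g = ⟨a, s̄⟩. Then for every bounded measurable function h : ℝ → ℝ and all indices i, j ∈ {1,…,n}: E[ h(g) · a_i a_j ] = E[h(g) g²] · s̄_i s̄_j + E[h(g)] · (δ_{ij} − s̄_i s̄_j), where δ_{ij} is the Kronecker delta. Equivalently, E[h(g) · a aᵀ] = E[h(g)] I_n + (E[h(g) g²] − E[h(g)]) s̄ s̄ᵀ. -/
open MeasureTheory ProbabilityTheory Matrix

/-- The squared-sum Euclidean (ℓ₂) norm of a vector in `Fin d → ℝ`. -/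
noncomputable def l2norm {d : ℕ} (v : Fin d → ℝ) : ℝ := Real.sqrt (∑ i, (v i) ^ 2)

/-- The standard Gaussian measure `N(0, I_n)` on `ℝ^n`. -/
noncomputable def piGauss (n : ℕ) : Measure (Fin n → ℝ) :=
  Measure.pi fun _ : Fin n => gaussianReal 0 1

instance piGauss_prob (n : ℕ) : IsProbabilityMeasure (piGauss n) := by
  unfold piGauss; infer_instance

lemma piGauss_hasLaw {n : ℕ} (i : Fin n) :
    (piGauss n).map (fun a => a i) = gaussianReal 0 1 :=
  (measurePreserving_eval (fun _ : Fin n => gaussianReal 0 1) i).map_eq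

lemma piGauss_iIndep (n : ℕ) : iIndepFun (fun (i : Fin n) (a : Fin n → ℝ) => a i) (piGauss n) :=
  iIndepFun_pi (μ := fun _ : Fin n => gaussianReal 0 1) (X := fun _ x => x)
    (fun _ => aemeasurable_id)

lemma piGauss_eval_law {n : ℕ} (i : Fin n) :
    HasGaussianLaw (fun a : Fin n → ℝ => a i) (piGauss n) where
  isGaussian_map := by rw [piGauss_hasLaw]; infer_instance

lemma piGauss_law (n : ℕ) : HasGaussianLaw (fun a : Fin n → ℝ => a) (piGauss n) :=
  (piGauss_iIndep n).hasGaussianLaw piGauss_eval_law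

/-- Linear functional. -/
noncomputable def dotL {n : ℕ} (u : Fin n → ℝ) : (Fin n → ℝ) →L[ℝ] ℝ :=
  ∑ i, u i • ContinuousLinearMap.proj i

lemma dotL_apply {n : ℕ} (u a : Fin n → ℝ) : dotL u a = a ⬝ᵥ u := by
  simp [dotL, dotProduct, mul_comm]

lemma dot_law {n : ℕ} (u : Fin n → ℝ) :
    HasGaussianLaw (fun a : Fin n → ℝ => a ⬝ᵥ u) (piGauss n) := by
  have := (piGauss_law n).map_fun (dotL u)
  simpa only [dotL_apply] using this

lemma eval_mean {n : ℕ} (i : Fin n) : ∫ a : Fin n → ℝ, a i ∂(piGauss n) = 0 := by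
  have := integral_map (μ := piGauss n) (φ := fun a => a i) (f := fun x : ℝ => x)
    (measurable_pi_apply i).aemeasurable (by fun_prop)
  rw [← this, piGauss_hasLaw]; simp

lemma dot_mean {n : ℕ} (u : Fin n → ℝ) : ∫ a : Fin n → ℝ, a ⬝ᵥ u ∂(piGauss n) = 0 := by
  simp only [dotProduct]
  rw [integral_finsetSum _ (fun i _ => (piGauss_eval_law i).integrable.mul_const _)]
  simp [integral_mul_const, eval_mean]

lemma eval_cov {n : ℕ} (i j : Fin n) :
    cov[fun a : Fin n → ℝ => a i, fun a => a j; piGauss n] = if i = j then 1 else 0 := by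
  split_ifs with h
  · subst h
    rw [covariance_self (measurable_pi_apply i).aemeasurable]
    have := variance_map (μ := piGauss n) (Y := fun a : Fin n → ℝ => a i) (X := fun x : ℝ => x)
      (by fun_prop) (measurable_pi_apply i).aemeasurable
    rw [piGauss_hasLaw] at this
    have h2 : Var[fun a : Fin n → ℝ => a i; piGauss n] = Var[fun x : ℝ => x; gaussianReal 0 1] :=
      this.symm
    rw [h2, variance_fun_id_gaussianReal]; simp
  · exact ((piGauss_iIndep n).indepFun h).covariance_eq_zero (piGauss_eval_law i).memLp_two
      (piGauss_eval_law j).memLp_two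

lemma dot_cov {n : ℕ} (u v : Fin n → ℝ) :
    cov[fun a : Fin n → ℝ => a ⬝ᵥ u, fun a => a ⬝ᵥ v; piGauss n] = u ⬝ᵥ v := by
  simp only [dotProduct]
  rw [covariance_fun_sum_fun_sum (fun i => (piGauss_eval_law i).memLp_two.mul_const _)
    (fun i => (piGauss_eval_law i).memLp_two.mul_const _)]
  simp [covariance_mul_const_left, covariance_mul_const_right, eval_cov]

lemma dot_second {n : ℕ} (u v : Fin n → ℝ) :
    ∫ a : Fin n → ℝ, (a ⬝ᵥ u) * (a ⬝ᵥ v) ∂(piGauss n) = u ⬝ᵥ v := by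
  have := covariance_eq_sub (dot_law u).memLp_two (dot_law v).memLp_two
  rw [dot_cov, dot_mean] at this
  simp at this
  exact this.symm

lemma dot_map {n : ℕ} (u : Fin n → ℝ) (hu : u ⬝ᵥ u = 1) :
    (piGauss n).map (fun a => a ⬝ᵥ u) = gaussianReal 0 1 := by
  have := (dot_law u).map_eq_gaussianReal
  rw [dot_mean, ← covariance_self (dot_law u).aemeasurable, dot_cov, hu] at this
  simpa using this

lemma dot_indep {n : ℕ} (s u v : Fin n → ℝ) (hu : s ⬝ᵥ u = 0) (hv : s ⬝ᵥ v = 0) :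
    IndepFun (fun a : Fin n → ℝ => fun _ : Fin 1 => a ⬝ᵥ s)
      (fun a : Fin n → ℝ => fun k : Fin 2 => a ⬝ᵥ (![u, v] k)) (piGauss n) := by
  refine HasGaussianLaw.indepFun_of_covariance_eval (X := fun _ : Fin 1 => fun a => a ⬝ᵥ s)
    (Y := fun (k : Fin 2) a => a ⬝ᵥ (![u, v] k)) ?_ ?_
  · have := (piGauss_law n).map_fun (ContinuousLinearMap.prod
      (ContinuousLinearMap.pi fun _ : Fin 1 => dotL s)
      (ContinuousLinearMap.pi fun k : Fin 2 => dotL (![u, v] k)))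
    have e : (fun a : Fin n → ℝ => ((fun _ : Fin 1 => a ⬝ᵥ s),
        (fun k : Fin 2 => a ⬝ᵥ (![u, v] k)))) = fun a => (ContinuousLinearMap.prod
      (ContinuousLinearMap.pi fun _ : Fin 1 => dotL s)
      (ContinuousLinearMap.pi fun k : Fin 2 => dotL (![u, v] k))) a := by
      funext a
      refine Prod.ext ?_ ?_
      · funext k; exact (dotL_apply _ _).symm
      · funext k; exact (dotL_apply _ _).symm
    rw [e]
    exact this
  · intro i k
    rw [dot_cov]
    fin_cases k <;> simp [hu, hv]

theorem stmt_14 (n : ℕ) (sb : Fin n → ℝ) (hsb : l2norm sb = 1)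
    (h : ℝ → ℝ) (hmeas : Measurable h) (hbdd : ∃ M, ∀ t, |h t| ≤ M) (i j : Fin n) :
    ∫ a : Fin n → ℝ, h (a ⬝ᵥ sb) * (a i * a j) ∂(piGauss n) =
      (∫ g, h g * g ^ 2 ∂(gaussianReal 0 1)) * (sb i * sb j) +
      (∫ g, h g ∂(gaussianReal 0 1)) * ((if i = j then (1 : ℝ) else 0) - sb i * sb j) := by
  obtain ⟨M, hM⟩ := hbdd
  have hs : sb ⬝ᵥ sb = 1 := by
    have : ∑ i, sb i ^ 2 = 1 := by simpa [l2norm] using hsb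
    simpa [dotProduct, pow_two] using this
  let w : Fin n → Fin n → ℝ := fun k => Pi.single k 1 - sb k • sb
  have hw : ∀ k, sb ⬝ᵥ w k = 0 := fun k => by simp [w, dotProduct_sub, hs]
  have haw : ∀ (a : Fin n → ℝ) k, a ⬝ᵥ w k = a k - sb k * (a ⬝ᵥ sb) := fun a k => by
    simp [w, dotProduct_sub]
  have hww : w i ⬝ᵥ w j = (if i = j then (1 : ℝ) else 0) - sb i * sb j := by
    rw [haw, dotProduct_comm (w i) sb, hw]
    simp [w, Pi.single_apply, mul_comm, eq_comm]
  have hind := dot_indep sb (w i) (w j) (hw i) (hw j)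
  have key : ∀ (f : ℝ → ℝ) (F : (Fin 2 → ℝ) → ℝ), Measurable f → Measurable F →
      ∫ a : Fin n → ℝ, f (a ⬝ᵥ sb) * F (fun k => a ⬝ᵥ (![w i, w j] k)) ∂(piGauss n) =
      (∫ g, f g ∂(gaussianReal 0 1)) *
        ∫ a : Fin n → ℝ, F (fun k => a ⬝ᵥ (![w i, w j] k)) ∂(piGauss n) := by
    intro f F hf hF
    have := hind.integral_fun_comp_mul_comp (f := fun x : Fin 1 → ℝ => f (x 0)) (g := F)
      (aemeasurable_pi_lambda _ fun _ => (dot_law sb).aemeasurable)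
      (aemeasurable_pi_lambda _ fun k => (dot_law _).aemeasurable)
      (hf.comp (measurable_pi_apply 0)).aestronglyMeasurable hF.aestronglyMeasurable
    rw [this, ← dot_map sb hs, integral_map (dot_law sb).aemeasurable hf.aestronglyMeasurable]
  have k1 := key (fun g => h g * g ^ 2) (fun _ => 1) (by fun_prop) (by fun_prop)
  have k2 := key (fun g => h g * g) (fun x => x 0) (by fun_prop) (by fun_prop)
  have k3 := key (fun g => h g * g) (fun x => x 1) (by fun_prop) (by fun_prop)
  have k4 := key h (fun x => x 0 * x 1) (by fun_prop) (by fun_prop)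
  simp only [cons_val_zero, cons_val_one, dot_mean, dot_second, hww, mul_one, mul_zero,
    integral_const, probReal_univ, smul_eq_mul] at k1 k2 k3 k4
  have hbd : ∀ u v : Fin n → ℝ, Integrable
      (fun a : Fin n → ℝ => h (a ⬝ᵥ sb) * ((a ⬝ᵥ u) * (a ⬝ᵥ v))) (piGauss n) := by
    intro u v
    refine Integrable.bdd_mul (c := M)
      ((dot_law u).memLp_two.integrable_mul (dot_law v).memLp_two) ?_ ?_
    · exact (hmeas.comp_aemeasurable (dot_law sb).aemeasurable).aestronglyMeasurable
    · exact Filter.Eventually.of_forall fun a => hM _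
  have i1 := (hbd sb sb).const_mul (sb i * sb j)
  have i2 := (hbd sb (w i)).const_mul (sb j)
  have i3 := (hbd sb (w j)).const_mul (sb i)
  have i4 := hbd (w i) (w j)
  have hsplit : ∀ a : Fin n → ℝ, h (a ⬝ᵥ sb) * (a i * a j) =
      sb i * sb j * (h (a ⬝ᵥ sb) * ((a ⬝ᵥ sb) * (a ⬝ᵥ sb))) +
      sb j * (h (a ⬝ᵥ sb) * ((a ⬝ᵥ sb) * (a ⬝ᵥ w i))) +
      sb i * (h (a ⬝ᵥ sb) * ((a ⬝ᵥ sb) * (a ⬝ᵥ w j))) +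
      h (a ⬝ᵥ sb) * ((a ⬝ᵥ w i) * (a ⬝ᵥ w j)) := by
    intro a; rw [haw, haw]; ring
  simp_rw [hsplit]
  rw [integral_add ((i1.fun_add i2).fun_add i3) i4, integral_add (i1.fun_add i2) i3, integral_add i1 i2,
    integral_const_mul, integral_const_mul, integral_const_mul, k4]
  simp_rw [← mul_assoc, k2, k3, mul_assoc, ← pow_two, k1]
  ring
end
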